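/- There is an absolute constant C > 0 such that for every integer n ≥ 3 there exists a family E of chords of the n-gon with |E| ≤ C · n^(4/3) · (log n)^(2/3) such that for every triple (k1, k2, k3) of nonnegative integers with k1 + k2 + k3 = n − 3, there exists a ∈ ZMod n at which E realizes the gap type (k1, k2, k3). -/

import Mathlib

/-!
It suffices to find a set `S` of `O(n^(2/3))` vertices containing a translate of every three-point
pattern: the chords with both ends in `S` then realize every gap type, and there are `O(n^(4/3))` of
them.

For patterns of `k + 1` points, let `m = ⌈n^(1/(k+1))⌉` and let `S` consist of the residues mod `n`
of the integers `z < 2 m^(k+1)` with a zero among their `k + 1` lowest base-`m` digits. Given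
`x₀, …, xₖ < n`, the digits of the translation `a` are chosen from the lowest one upwards, so that
digit `d` of `a + x_d` vanishes: changing digit `d` of `a` does not affect the lower digits of the
sums already treated, and it shifts digit `d` of `a + x_d` freely whatever the carry into it.
-/

/-- A family `E` of chords of the `n`-gon (vertices identified with `ZMod n`) realizes the
gap type `(k1, k2, k3)` at the vertex `a` if the three chords of the corresponding triangle
all belong to `E`. -/
def RealizesGapType (n : ℕ) (E : Finset (Sym2 (ZMod n))) (k1 k2 k3 : ℕ) (a : ZMod n) : Prop :=
  s(a, a + (k1 : ZMod n) + 1) ∈ E ∧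
  s(a + (k1 : ZMod n) + 1, a + (k1 : ZMod n) + (k2 : ZMod n) + 2) ∈ E ∧
  s(a + (k1 : ZMod n) + (k2 : ZMod n) + 2, a) ∈ E

open Finset

lemma exists_lt_add_mod_eq_zero {m : ℕ} (hm : 0 < m) (v : ℕ) : ∃ i < m, (v + i) % m = 0 := by
  refine ⟨(m - v % m) % m, Nat.mod_lt _ hm, ?_⟩
  rw [Nat.add_mod_mod, ← Nat.mod_add_mod, Nat.add_sub_cancel' (Nat.mod_lt v hm).le, Nat.mod_self]

lemma add_pow_mul_div_pow_mod {m d k : ℕ} (hm : 0 < m) (hd : d < k) (z j : ℕ) :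
    (z + m ^ k * j) / m ^ d % m = z / m ^ d % m := by
  obtain ⟨e, rfl⟩ := Nat.exists_eq_add_of_lt hd
  rw [show m ^ (d + e + 1) * j = m ^ d * (m * (m ^ e * j)) by ring,
    Nat.add_mul_div_left _ _ (by positivity), Nat.add_mul_mod_self_left]

lemma exists_lt_pow_digit_add_eq_zero {m : ℕ} (hm : 0 < m) {k : ℕ} (x : Fin k → ℕ) :
    ∃ a < m ^ k, ∀ d : Fin k, (a + x d) / m ^ (d : ℕ) % m = 0 := by
  induction k with
  | zero => exact ⟨0, by simp, fun d => d.elim0⟩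
  | succ k ih =>
    obtain ⟨a, ha, hdigits⟩ := ih fun d => x d.castSucc
    obtain ⟨j, hj, hdigit⟩ := exists_lt_add_mod_eq_zero hm ((a + x (Fin.last k)) / m ^ k)
    refine ⟨a + m ^ k * j, ?_, Fin.forall_fin_succ'.2 ⟨fun d => ?_, ?_⟩⟩
    · calc a + m ^ k * j < m ^ k + m ^ k * j := by gcongr
        _ = m ^ k * (j + 1) := by ring
        _ ≤ m ^ k * m := by gcongr; exact hj
        _ = m ^ (k + 1) := (pow_succ m k).symm
    · rw [add_right_comm, Fin.val_castSucc, add_pow_mul_div_pow_mod hm d.isLt]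
      exact hdigits d
    · rw [add_right_comm, Fin.val_last, Nat.add_mul_div_left _ _ (by positivity)]
      exact hdigit

lemma card_filter_digit_eq_zero_le {m d k : ℕ} (hm : 0 < m) (hd : d ≤ k) (N : ℕ) :
    #{z ∈ range (N * m ^ (k + 1)) | z / m ^ d % m = 0} ≤ N * m ^ k := by
  obtain ⟨e, rfl⟩ := Nat.exists_eq_add_of_le hd
  -- a number whose digit `d` vanishes is determined by the digits below and above position `d`
  calc #{z ∈ range (N * m ^ (d + e + 1)) | z / m ^ d % m = 0}
      ≤ #(range (m ^ d) ×ˢ range (N * m ^ e)) := by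
        refine card_le_card_of_injOn (fun z => (z % m ^ d, z / m ^ d / m)) (fun z hz => ?_) ?_
        · have hlt : z < m ^ d * m * (N * m ^ e) :=
            (mem_range.1 (mem_filter.1 hz).1).trans_eq (by ring)
          simp only [coe_product, Set.mem_prod, mem_coe, mem_range, Nat.div_div_eq_div_mul]
          exact ⟨Nat.mod_lt _ (by positivity), Nat.div_lt_of_lt_mul hlt⟩
        · intro z hz w hw hzw
          obtain ⟨hlow, hhigh⟩ := Prod.mk.inj hzw
          have hdiv : z / m ^ d = w / m ^ d := by
            rw [← Nat.mod_add_div (z / m ^ d) m, ← Nat.mod_add_div (w / m ^ d) m,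
              (mem_filter.1 hz).2, (mem_filter.1 hw).2, hhigh]
          rw [← Nat.mod_add_div z (m ^ d), ← Nat.mod_add_div w (m ^ d), hlow, hdiv]
    _ = N * m ^ (d + e) := by
        rw [card_product, card_range, card_range]
        ring

/-- The residues mod `n` of the numbers below `2 * m ^ k` having a zero among their `k` lowest
base-`m` digits. The factor `2` leaves room for the sum of two numbers below `m ^ k`. -/
def zeroDigitSet (n m k : ℕ) : Finset (ZMod n) :=
  (range k).biUnion fun d =>
    {z ∈ range (2 * m ^ k) | z / m ^ d % m = 0}.image (Nat.cast : ℕ → ZMod n)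

lemma card_zeroDigitSet_succ_le (n k : ℕ) {m : ℕ} (hm : 0 < m) :
    #(zeroDigitSet n m (k + 1)) ≤ (k + 1) * (2 * m ^ k) := by
  simpa only [zeroDigitSet, card_range] using card_biUnion_le_card_mul (range (k + 1)) _ (2 * m ^ k)
    fun d hd => card_image_le.trans
      (card_filter_digit_eq_zero_le hm (Nat.lt_succ_iff.1 (mem_range.1 hd)) 2)

lemma exists_forall_add_mem_zeroDigitSet {n m k : ℕ} [NeZero n] (hn : n ≤ m ^ k) (hm : 0 < m)
    (x : Fin k → ZMod n) : ∃ a : ZMod n, ∀ d, a + x d ∈ zeroDigitSet n m k := by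
  obtain ⟨a, ha, hdigits⟩ := exists_lt_pow_digit_add_eq_zero hm fun d => (x d).val
  refine ⟨a, fun d => ?_⟩
  have hlt : a + (x d).val < 2 * m ^ k := by
    have := (x d).val_lt
    lia
  refine mem_biUnion.2 ⟨d, mem_range.2 d.isLt, mem_image.2 ⟨a + (x d).val, ?_, ?_⟩⟩
  · exact mem_filter.2 ⟨mem_range.2 hlt, hdigits d⟩
  · rw [Nat.cast_add, ZMod.natCast_zmod_val]

lemma exists_le_pow_and_le_two_mul_rpow {n k : ℕ} (hn : 1 ≤ n) (hk : k ≠ 0) :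
    ∃ m : ℕ, 0 < m ∧ n ≤ m ^ k ∧ (m : ℝ) ≤ 2 * (n : ℝ) ^ (k⁻¹ : ℝ) := by
  have hroot : 1 ≤ (n : ℝ) ^ (k⁻¹ : ℝ) := Real.one_le_rpow (mod_cast hn) (by positivity)
  refine ⟨⌈(n : ℝ) ^ (k⁻¹ : ℝ)⌉₊, Nat.ceil_pos.2 (by positivity), ?_,
    Nat.ceil_le_two_mul (by linarith)⟩
  rw [← Nat.cast_le (α := ℝ), Nat.cast_pow]
  calc (n : ℝ) = ((n : ℝ) ^ (k⁻¹ : ℝ)) ^ k := (Real.rpow_inv_natCast_pow n.cast_nonneg hk).symm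
    _ ≤ _ := by gcongr; exact Nat.le_ceil _

theorem exists_card_le_forall_exists_add_mem (n k : ℕ) [NeZero n] :
    ∃ S : Finset (ZMod n),
      (#S : ℝ) ≤ (k + 1) * 2 ^ (k + 1) * (n : ℝ) ^ ((k : ℝ) / (k + 1)) ∧
        ∀ x : Fin (k + 1) → ZMod n, ∃ a, ∀ i, a + x i ∈ S := by
  obtain ⟨m, hm, hn, hle⟩ :=
    exists_le_pow_and_le_two_mul_rpow (NeZero.one_le (n := n)) k.succ_ne_zero
  refine ⟨zeroDigitSet n m (k + 1), ?_, exists_forall_add_mem_zeroDigitSet hn hm⟩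
  calc (#(zeroDigitSet n m (k + 1)) : ℝ)
      ≤ (k + 1) * (2 * (m : ℝ) ^ k) := mod_cast card_zeroDigitSet_succ_le n k hm
    _ ≤ (k + 1) * (2 * (2 * (n : ℝ) ^ ((k + 1 : ℕ) : ℝ)⁻¹) ^ k) := by gcongr
    _ = (k + 1) * 2 ^ (k + 1) * ((n : ℝ) ^ ((k + 1 : ℕ) : ℝ)⁻¹) ^ k := by ring
    _ = (k + 1) * 2 ^ (k + 1) * (n : ℝ) ^ ((k : ℝ) / (k + 1)) := by
        rw [← Real.rpow_mul_natCast n.cast_nonneg, Nat.cast_succ, inv_mul_eq_div]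

/-- The chords with both ends in `S`: the edges of the complete graph on `S`. -/
def chordsOn {α : Type*} [DecidableEq α] (S : Finset α) : Finset (Sym2 α) :=
  S.offDiag.image Sym2.mk.uncurry

section chordsOn

variable {α : Type*} [DecidableEq α] {S : Finset α}

lemma not_isDiag_of_mem_chordsOn {e : Sym2 α} (he : e ∈ chordsOn S) : ¬e.IsDiag := by
  obtain ⟨⟨u, v⟩, huv, rfl⟩ := mem_image.1 he
  exact (mem_offDiag.1 huv).2.2

lemma mk_mem_chordsOn {u v : α} (hu : u ∈ S) (hv : v ∈ S) (huv : u ≠ v) : s(u, v) ∈ chordsOn S :=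
  mem_image.2 ⟨(u, v), mem_offDiag.2 ⟨hu, hv, huv⟩, rfl⟩

lemma card_chordsOn_le (S : Finset α) : (#(chordsOn S) : ℝ) ≤ (#S : ℝ) ^ 2 / 2 := by
  rw [chordsOn, Sym2.card_image_offDiag]
  exact Nat.choose_le_pow_div 2 #S

end chordsOn

lemma add_natCast_ne_self {n t : ℕ} (h0 : 0 < t) (ht : t < n) (a : ZMod n) : a + t ≠ a := by
  rw [Ne, add_eq_left, ZMod.natCast_eq_zero_iff]
  exact Nat.not_dvd_of_pos_of_lt h0 ht

lemma realizesGapType_chordsOn {n k1 k2 : ℕ} (k3 : ℕ) (hlt : k1 + k2 + 2 < n)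
    {S : Finset (ZMod n)} {a : ZMod n} (ha : a ∈ S) (hb : a + k1 + 1 ∈ S)
    (hc : a + k1 + k2 + 2 ∈ S) : RealizesGapType n (chordsOn S) k1 k2 k3 a := by
  have hba : a + k1 + 1 ≠ a := by
    simpa [add_assoc] using add_natCast_ne_self (t := k1 + 1) (by lia) (by lia) a
  have hcb : a + k1 + k2 + 2 ≠ a + k1 + 1 := by
    rw [show a + k1 + k2 + 2 = a + k1 + 1 + (k2 + 1 : ℕ) by push_cast; ring]
    exact add_natCast_ne_self (by lia) (by lia) _
  have hca : a + k1 + k2 + 2 ≠ a := by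
    simpa [add_assoc] using add_natCast_ne_self (t := k1 + k2 + 2) (by lia) hlt a
  exact ⟨mk_mem_chordsOn ha hb hba.symm, mk_mem_chordsOn hb hc hcb.symm, mk_mem_chordsOn hc ha hca⟩

theorem universal_triangle_types_upper_bound_general :
    ∃ C : ℝ, 0 < C ∧ ∀ n : ℕ, 3 ≤ n →
      ∃ E : Finset (Sym2 (ZMod n)),
        (∀ e ∈ E, ¬ e.IsDiag) ∧
        (E.card : ℝ) ≤ C * (n : ℝ) ^ ((4 : ℝ) / 3) ∧
        ∀ k1 k2 k3 : ℕ, k1 + k2 + k3 = n - 3 →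
          ∃ a : ZMod n, RealizesGapType n E k1 k2 k3 a := by
  refine ⟨288, by norm_num, fun n hn => ?_⟩
  have : NeZero n := ⟨by lia⟩
  obtain ⟨S, hcard, htranslate⟩ := exists_card_le_forall_exists_add_mem n 2
  refine ⟨chordsOn S, fun _ => not_isDiag_of_mem_chordsOn, ?_, fun k1 k2 k3 hk => ?_⟩
  · calc (#(chordsOn S) : ℝ) ≤ (#S : ℝ) ^ 2 / 2 := card_chordsOn_le S
      _ ≤ (24 * (n : ℝ) ^ ((2 : ℝ) / 3)) ^ 2 / 2 := by
        gcongr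
        exact hcard.trans_eq (by norm_num)
      _ = 288 * ((n : ℝ) ^ ((2 : ℝ) / 3)) ^ 2 := by ring
      _ = 288 * (n : ℝ) ^ ((4 : ℝ) / 3) := by
        rw [← Real.rpow_mul_natCast n.cast_nonneg]
        norm_num
  · obtain ⟨a, ha⟩ := htranslate ![0, k1 + 1, k1 + k2 + 2]
    refine ⟨a, realizesGapType_chordsOn k3 (by lia) ?_ ?_ ?_⟩
    · simpa using ha 0
    · simpa [add_assoc] using ha 1
    · simpa [add_assoc] using ha 2

lemma one_le_log_natCast {n : ℕ} (hn : 3 ≤ n) : 1 ≤ Real.log n := by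
  rw [Real.le_log_iff_exp_le (by positivity)]
  exact Real.exp_one_lt_three.le.trans (mod_cast hn)

/-- There is an absolute constant `C > 0` such that for every `n ≥ 3` there is a family `E`
of chords of the `n`-gon, of size at most `C * n^(4/3) * (log n)^(2/3)`, realizing every
gap type `(k1, k2, k3)` with `k1 + k2 + k3 = n - 3` at some vertex. -/
theorem universal_triangle_types_upper_bound :
    ∃ C : ℝ, 0 < C ∧ ∀ n : ℕ, 3 ≤ n →
      ∃ E : Finset (Sym2 (ZMod n)),
        (∀ e ∈ E, ¬ e.IsDiag) ∧
        (E.card : ℝ) ≤ C * (n : ℝ) ^ ((4 : ℝ) / 3) * (Real.log n) ^ ((2 : ℝ) / 3) ∧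
        ∀ k1 k2 k3 : ℕ, k1 + k2 + k3 = n - 3 →
          ∃ a : ZMod n, RealizesGapType n E k1 k2 k3 a := by
  obtain ⟨C, hC, h⟩ := universal_triangle_types_upper_bound_general
  refine ⟨C, hC, fun n hn => (h n hn).imp fun E ⟨hdiag, hcard, hgap⟩ => ⟨hdiag, ?_, hgap⟩⟩
  exact hcard.trans <| le_mul_of_one_le_right (by positivity) <|
    Real.one_le_rpow (one_le_log_natCast hn) (by norm_num)
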